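/- There exists a function f on the set of bi-infinite sequences of positive integers such that for every bi-infinite sequence α̂ = (a_n)_{n∈ℤ} of positive integers and every n ≥ 1, | f_n(α̂) − f(α̂) | ≤ 2^{3−n}; in particular f_n converges to f uniformly and exponentially fast, so that ln q_n(α̂) = Σ_{k=1}^n ln [a_k; a_{k−1}, a_{k−2}, …] + f(α̂) + ε_n(α̂) with sup_{α̂} |ε_n(α̂)| = O(2^{−n}). -/

import Mathlib

open MeasureTheory Filter Set Topology

noncomputable section

/-- The Gauss map `x ↦ {1/x}`. -/
def gaussMap (x : ℝ) : ℝ := Int.fract (1 / x)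

/-- The `n`-th partial quotient (1-indexed) of the continued fraction expansion of `α`:
`pq α n = ⌊1 / 𝒢^{n-1} α⌋`. -/
def pq (α : ℝ) (n : ℕ) : ℕ := ⌊1 / gaussMap^[n - 1] α⌋₊

/-- Denominators of the convergents attached to a (1-indexed) sequence of partial quotients:
`q 0 = 1`, `q 1 = b 1`, `q (n+2) = b (n+2) * q (n+1) + q n`. -/
def qden (b : ℕ → ℕ) : ℕ → ℕ
  | 0 => 1
  | 1 => b 1
  | n + 2 => b (n + 2) * qden b (n + 1) + qden b n

/-- Numerators of the convergents attached to a (1-indexed) sequence of partial quotients: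
`p 0 = 0`, `p 1 = 1`, `p (n+2) = b (n+2) * p (n+1) + p n`. -/
def pnum (b : ℕ → ℕ) : ℕ → ℕ
  | 0 => 0
  | 1 => 1
  | n + 2 => b (n + 2) * pnum b (n + 1) + pnum b n

/-- `n_R(α)`: the first index `n` with `q_n(α) > R`. -/
def nIndex (α : ℝ) (R : ℝ) : ℕ := sInf {n : ℕ | R < (qden (pq α) n : ℝ)}

/-- The Gauss measure on `(0,1)`, with density `1 / (ln 2 · (1 + x))`. -/
def gaussMeasure : Measure ℝ :=
  (volume.restrict (Ioo (0 : ℝ) 1)).withDensity fun x =>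
    ENNReal.ofReal (1 / (Real.log 2 * (1 + x)))

/-- The domain `D = ((0,1) ∖ ℚ) × ((0,1) ∖ ℚ)` of the natural extension of the Gauss map. -/
def Dset : Set (ℝ × ℝ) :=
  {p | p.1 ∈ Ioo (0 : ℝ) 1 ∧ Irrational p.1 ∧ p.2 ∈ Ioo (0 : ℝ) 1 ∧ Irrational p.2}

/-- The invariant measure `μ₂` on `D`, with density `1 / (ln 2 · (1 + x y)²)`. -/
def mu2 : Measure (ℝ × ℝ) :=
  (volume.restrict Dset).withDensity fun p =>
    ENNReal.ofReal (1 / (Real.log 2 * (1 + p.1 * p.2) ^ 2))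

/-- The roof function `φ(x, y) = ln (⌊1/y⌋ + x)`. -/
def roof (p : ℝ × ℝ) : ℝ := Real.log ((⌊1 / p.2⌋ : ℝ) + p.1)

/-- The natural extension of the Gauss map,
`Ĝ(x, y) = (1 / (⌊1/y⌋ + x), 1/y − ⌊1/y⌋)`. -/
def GhatMap (p : ℝ × ℝ) : ℝ × ℝ := (1 / ((⌊1 / p.2⌋ : ℝ) + p.1), Int.fract (1 / p.2))

/-- Birkhoff sums `S_r φ(p) = ∑_{i<r} φ(Ĝ^i p)` of the roof function under `Ĝ`. -/
def birk (p : ℝ × ℝ) (r : ℕ) : ℝ := ∑ i ∈ Finset.range r, roof (GhatMap^[i] p)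

/-- `r(p, T)`: the first `r` with `S_r φ(p) > T`. -/
def rTime (p : ℝ × ℝ) (T : ℝ) : ℕ := sInf {r : ℕ | T < birk p r}

/-- Value of a finite continued fraction `[b₁, b₂, …, bₘ] = 1/(b₁ + 1/(b₂ + ⋯ + 1/bₘ))`,
entries given as a list. -/
def cfList : List ℝ → ℝ
  | [] => 0
  | b :: t => 1 / (b + cfList t)

/-- The `m`-th truncation `[b 1, b 2, …, b m]` of an infinite continued fraction. -/
def cfTrunc (b : ℕ → ℝ) (m : ℕ) : ℝ := cfList ((List.range m).map fun i => b (i + 1))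

/-- Value of the infinite continued fraction `[b 1, b 2, …]`, i.e. the limit of its finite
truncations. -/
def cfVal (b : ℕ → ℝ) : ℝ := limUnder atTop fun m => cfTrunc b m

/-- The finite continued fraction on the reversed word,
`cfRev b k = [b k; b (k-1), …, b 1] = b k + 1/(b (k-1) + ⋯ + 1/(b 1))`. -/
def cfRev (b : ℕ → ℝ) (k : ℕ) : ℝ :=
  b k + cfList ((List.range (k - 1)).map fun i => b (k - 1 - i))

/-- For a bi-infinite sequence `a : ℤ → ℕ` of partial quotients,
`fn a n = ln q_n − ∑_{k=1}^n ln [a_k; a_{k-1}, a_{k-2}, …]`. -/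
def fn (a : ℤ → ℕ) (n : ℕ) : ℝ :=
  Real.log (qden (fun k => a (k : ℤ)) n : ℝ) -
    ∑ k ∈ Finset.Icc 1 n,
      Real.log ((a (k : ℤ) : ℝ) + cfVal fun j => (a ((k : ℤ) - (j : ℤ)) : ℝ))

/-- The bi-sided cylinder of length `n` in `D` prescribing the sequence coordinates
`a_k = b k` for `−n ≤ k ≤ n` (where `a_k`, `k ≥ 1`, are the partial quotients of the second
coordinate and `a_{−j}`, `j ≥ 0`, are the partial quotients of the first coordinate). -/
def cylinder (n : ℕ) (b : ℤ → ℕ) : Set (ℝ × ℝ) :=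
  {p ∈ Dset | (∀ k : ℕ, 1 ≤ k → k ≤ n → pq p.2 k = b (k : ℤ)) ∧
    ∀ j : ℕ, j ≤ n → pq p.1 (j + 1) = b (-(j : ℤ))}

/-- The phase space of the special flow over `Ĝ` with roof function `φ`. -/
def DPhi : Set ((ℝ × ℝ) × ℝ) := {q | q.1 ∈ Dset ∧ 0 ≤ q.2 ∧ q.2 < roof q.1}

/-- The invariant probability measure `μ₃` of the special flow. -/
def mu3 : Measure ((ℝ × ℝ) × ℝ) :=
  (ENNReal.ofReal (∫ p, roof p ∂mu2))⁻¹ • ((mu2.prod volume).restrict DPhi)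

/-- The special flow `Φ_t` (for `t ≥ 0`) built over `Ĝ` with roof function `φ`:
`Φ_t(p, s) = (Ĝ^{r-1} p, s + t − S_{r-1} φ(p))` where `r = r(p, s + t)`. -/
def flowMap (t : ℝ) (q : (ℝ × ℝ) × ℝ) : (ℝ × ℝ) × ℝ :=
  (GhatMap^[rTime q.1 (q.2 + t) - 1] q.1,
    q.2 + t - birk q.1 (rTime q.1 (q.2 + t) - 1))

end

/-!
For `a, x, y ≥ 1` the map `x ↦ a + 1 / x` contracts the distance `|ln x - ln y|` by a factor of at
least `2`, because `(a + 1 / x) ^ 2 * x` is increasing in `x ≥ 1`. Hence, on the logarithmic scale,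
continued fractions with the same entries up to depth `n` differ by `O(2 ^ (-n))`. Since
`q_{n+1} / q_n = [a_{n+1}; a_n, …, a_1]`, the increment `f_{n+1} - f_n` compares this truncation
with the full expansion `[a_{n+1}; a_n, a_{n-1}, …]`, so `f_n` converges geometrically.
-/

section LogContraction

variable {a x y : ℝ}

lemma sq_add_inv_mul_le_sq_add_inv_mul (hx : 0 < x) (hxy : x ≤ y) (h : 1 ≤ a ^ 2 * (x * y)) :
    (a + x⁻¹) ^ 2 * x ≤ (a + y⁻¹) ^ 2 * y := by
  have hy : 0 < y := hx.trans_le hxy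
  have difference : (a + y⁻¹) ^ 2 * y - (a + x⁻¹) ^ 2 * x =
      (y - x) * (a ^ 2 * (x * y) - 1) / (x * y) := by
    field_simp
    ring
  have : 0 ≤ (y - x) * (a ^ 2 * (x * y) - 1) / (x * y) :=
    div_nonneg (mul_nonneg (sub_nonneg.2 hxy) (sub_nonneg.2 h)) (mul_pos hx hy).le
  linarith

lemma abs_log_add_inv_sub_log_add_inv_le (ha : 0 < a) (hx : 0 < x) (hy : 0 < y)
    (h : 1 ≤ a ^ 2 * (x * y)) :
    |Real.log (a + x⁻¹) - Real.log (a + y⁻¹)| ≤ |Real.log x - Real.log y| / 2 := by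
  wlog hxy : x ≤ y generalizing x y
  · rw [abs_sub_comm, abs_sub_comm (Real.log x)]
    exact this hy hx (by rwa [mul_comm y]) (le_of_not_ge hxy)
  have hX : 0 < a + x⁻¹ := by positivity
  have hY : 0 < a + y⁻¹ := by positivity
  have hlog : Real.log x ≤ Real.log y := Real.log_le_log hx hxy
  have hlog_add_inv : Real.log (a + y⁻¹) ≤ Real.log (a + x⁻¹) :=
    Real.log_le_log hY (by gcongr)
  have hlog_sq : 2 * Real.log (a + x⁻¹) + Real.log x ≤ 2 * Real.log (a + y⁻¹) + Real.log y := by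
    simpa [Real.log_mul, hX.ne', hY.ne', hx.ne', hy.ne'] using
      Real.log_le_log (by positivity) (sq_add_inv_mul_le_sq_add_inv_mul hx hxy h)
  rw [abs_of_nonneg (sub_nonneg.2 hlog_add_inv), abs_of_nonpos (sub_nonpos.2 hlog)]
  linarith

lemma abs_log_sub_log_add_inv_le (ha : 0 < a) (hx : 0 < x) :
    |Real.log a - Real.log (a + x⁻¹)| ≤ (a * x)⁻¹ := by
  have hlog : Real.log a ≤ Real.log (a + x⁻¹) :=
    Real.log_le_log ha (le_add_of_nonneg_right (inv_nonneg.2 hx.le))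
  rw [abs_sub_comm, abs_of_nonneg (sub_nonneg.2 hlog), ← Real.log_div (by positivity) ha.ne']
  calc Real.log ((a + x⁻¹) / a) ≤ (a + x⁻¹) / a - 1 := Real.log_le_sub_one_of_pos (by positivity)
    _ = (a * x)⁻¹ := by field_simp; ring

end LogContraction

section Truncations

lemma cfTrunc_zero (b : ℕ → ℝ) : cfTrunc b 0 = 0 := by
  simp [cfTrunc, cfList]

lemma cfTrunc_succ (b : ℕ → ℝ) (m : ℕ) :
    cfTrunc b (m + 1) = (b 1 + cfTrunc (fun j => b (j + 1)) m)⁻¹ := by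
  simp [cfTrunc, List.range_succ_eq_map, cfList, Function.comp_def]

lemma cfTrunc_nonneg {b : ℕ → ℝ} (hb : ∀ j, 0 ≤ b (j + 1)) (m : ℕ) : 0 ≤ cfTrunc b m := by
  induction m generalizing b with
  | zero => exact (cfTrunc_zero b).ge
  | succ m ih =>
    rw [cfTrunc_succ]
    exact inv_nonneg.2 (add_nonneg (hb 0) (ih fun j => hb (j + 1)))

variable {b : ℕ → ℝ} {c : ℝ}

lemma abs_log_add_cfTrunc_sub_log_add_cfTrunc_succ_le (hc : 1 ≤ c) (hb : ∀ j, 1 ≤ b (j + 1))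
    (m : ℕ) :
    |Real.log (c + cfTrunc b m) - Real.log (c + cfTrunc b (m + 1))| ≤ 1 / 2 ^ m := by
  induction m generalizing b c with
  | zero =>
    have hb₁ : 1 ≤ b 1 := hb 0
    simp only [cfTrunc_succ, cfTrunc_zero, add_zero, pow_zero, div_one]
    exact (abs_log_sub_log_add_inv_le (by linarith) (by linarith)).trans
      (inv_le_one_of_one_le₀ (one_le_mul_of_one_le_of_one_le hc hb₁))
  | succ m ih =>
    have hb₁ : 1 ≤ b 1 := hb 0
    have one_le_tail (k : ℕ) : 1 ≤ b 1 + cfTrunc (fun j => b (j + 1)) k :=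
      le_add_of_le_of_nonneg hb₁ (cfTrunc_nonneg (fun j => zero_le_one.trans (hb (j + 1))) k)
    rw [cfTrunc_succ, cfTrunc_succ b (m + 1), pow_succ, ← div_div]
    refine (abs_log_add_inv_sub_log_add_inv_le (by linarith) (by linarith [one_le_tail m])
      (by linarith [one_le_tail (m + 1)]) ?_).trans ?_
    · exact one_le_mul_of_one_le_of_one_le (one_le_pow₀ hc)
        (one_le_mul_of_one_le_of_one_le (one_le_tail m) (one_le_tail (m + 1)))
    · gcongr
      exact ih hb₁ fun j => hb (j + 1)

lemma tendsto_cfTrunc (hb : ∀ j, 1 ≤ b (j + 1)) :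
    Tendsto (cfTrunc b) atTop (𝓝 (cfVal b)) := by
  have pos (m : ℕ) : 0 < 1 + cfTrunc b m :=
    add_pos_of_pos_of_nonneg one_pos (cfTrunc_nonneg (fun j => zero_le_one.trans (hb j)) m)
  have cauchy : CauchySeq fun m => Real.log (1 + cfTrunc b m) :=
    cauchySeq_of_le_geometric_two (C := 2) fun m => by
      simpa [Real.dist_eq] using abs_log_add_cfTrunc_sub_log_add_cfTrunc_succ_le le_rfl hb m
  obtain ⟨l, hl⟩ := cauchySeq_tendsto_of_complete cauchy
  have tendsto_exp : Tendsto (cfTrunc b) atTop (𝓝 (Real.exp l - 1)) := by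
    simpa [Function.comp_def, Real.exp_log (pos _)] using
      ((Real.continuous_exp.tendsto l).comp hl).sub_const 1
  exact tendsto_nhds_limUnder ⟨_, tendsto_exp⟩

lemma cfVal_nonneg (hb : ∀ j, 1 ≤ b (j + 1)) : 0 ≤ cfVal b :=
  ge_of_tendsto' (tendsto_cfTrunc hb) (cfTrunc_nonneg fun j => zero_le_one.trans (hb j))

lemma abs_log_add_cfTrunc_sub_log_add_cfVal_le (hc : 1 ≤ c) (hb : ∀ j, 1 ≤ b (j + 1)) (m : ℕ) :
    |Real.log (c + cfTrunc b m) - Real.log (c + cfVal b)| ≤ 2 / 2 ^ m := by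
  have hlim : Tendsto (fun k => Real.log (c + cfTrunc b k)) atTop (𝓝 (Real.log (c + cfVal b))) :=
    ((tendsto_cfTrunc hb).const_add c).log (by linarith [cfVal_nonneg hb])
  rw [← Real.dist_eq]
  refine dist_le_of_le_geometric_two_of_tendsto (fun k => ?_) hlim m
  simpa [Real.dist_eq] using abs_log_add_cfTrunc_sub_log_add_cfTrunc_succ_le hc hb k

end Truncations

section Denominators

lemma qden_pos {b : ℕ → ℕ} (hb : ∀ j, 0 < b (j + 1)) : ∀ n, 0 < qden b n
  | 0 => one_pos
  | 1 => hb 0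
  | n + 2 => Nat.add_pos_right _ (qden_pos hb n)

lemma cfRev_one (b : ℕ → ℝ) : cfRev b 1 = b 1 := by
  simp [cfRev, cfList]

lemma cfRev_add_two (b : ℕ → ℝ) (n : ℕ) :
    cfRev b (n + 2) = b (n + 2) + (cfRev b (n + 1))⁻¹ := by
  simp [cfRev, List.range_succ_eq_map, cfList, Function.comp_def]

lemma qden_succ_div_qden {b : ℕ → ℕ} (hb : ∀ j, 0 < b (j + 1)) (n : ℕ) :
    (qden b (n + 1) : ℝ) / qden b n = cfRev (fun k => (b k : ℝ)) (n + 1) := by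
  induction n with
  | zero => simp [cfRev_one, qden]
  | succ n ih =>
    have hq : (qden b (n + 1) : ℝ) ≠ 0 := by exact_mod_cast (qden_pos hb (n + 1)).ne'
    rw [cfRev_add_two, ← ih, inv_div, qden]
    push_cast
    field_simp

lemma cfRev_succ_eq_add_cfTrunc (u : ℤ → ℝ) (n : ℕ) :
    cfRev (fun k => u k) (n + 1) =
      u (n + 1 : ℕ) + cfTrunc (fun j => u ((n + 1 : ℕ) - j)) n := by
  unfold cfRev cfTrunc
  congr 2
  refine List.map_congr_left fun i hi => congrArg u ?_
  have := List.mem_range.1 hi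
  omega

end Denominators

section Limit

variable {a : ℤ → ℕ}

lemma fn_succ_sub_fn (ha : ∀ k : ℕ, 0 < a (k + 1 : ℕ)) (n : ℕ) :
    fn a (n + 1) - fn a n =
      Real.log (a (n + 1 : ℕ) + cfTrunc (fun j => (a ((n + 1 : ℕ) - j) : ℝ)) n) -
        Real.log (a (n + 1 : ℕ) + cfVal fun j => (a ((n + 1 : ℕ) - j) : ℝ)) := by
  have hq (m : ℕ) : (qden (fun k => a k) m : ℝ) ≠ 0 := by
    exact_mod_cast (qden_pos (b := fun k => a k) ha m).ne'
  rw [← cfRev_succ_eq_add_cfTrunc (fun k => (a k : ℝ)), ← qden_succ_div_qden ha,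
    Real.log_div (hq _) (hq _), fn, fn, Finset.sum_Icc_succ_top (Nat.le_add_left 1 n)]
  ring

lemma dist_fn_fn_succ_le (ha : ∀ m, 0 < a m) (n : ℕ) :
    dist (fn a n) (fn a (n + 1)) ≤ 2 / 2 ^ n := by
  have one_le (m : ℤ) : (1 : ℝ) ≤ a m := by exact_mod_cast ha m
  rw [dist_comm, Real.dist_eq, fn_succ_sub_fn fun k => ha _]
  exact abs_log_add_cfTrunc_sub_log_add_cfVal_le (one_le _) (fun j => one_le _) n

/-- The limit `f(α̂)` of `f_n(α̂)`; a junk value when `f_n(α̂)` does not converge, which cannot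
happen when all entries of `α̂` are positive. -/
noncomputable def fnLim (a : ℤ → ℕ) : ℝ := limUnder atTop (fn a)

lemma dist_fn_fnLim_le (ha : ∀ m, 0 < a m) (n : ℕ) :
    dist (fn a n) (fnLim a) ≤ 4 / 2 ^ n := by
  have hstep (k : ℕ) : dist (fn a k) (fn a (k + 1)) ≤ 4 / 2 / 2 ^ k :=
    (dist_fn_fn_succ_le ha k).trans_eq (by norm_num)
  exact dist_le_of_le_geometric_two_of_tendsto hstep
    (cauchySeq_of_le_geometric_two hstep).tendsto_limUnder n

end Limit

/-- There is a function `f` on bi-infinite sequences of positive integers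
such that `|f_n(α̂) − f(α̂)| ≤ 2^{3−n}` for all such sequences `α̂` and all `n ≥ 1`; in
particular `ln q_n = ∑_{k=1}^n ln [a_k; a_{k−1}, …] + f + ε_n` with `sup |ε_n| = O(2^{−n})`. -/
theorem statement3 :
    ∃ f : (ℤ → ℕ) → ℝ,
      ∀ a : ℤ → ℕ, (∀ m : ℤ, 0 < a m) → ∀ n : ℕ, 1 ≤ n →
        |fn a n - f a| ≤ (2 : ℝ) ^ ((3 : ℤ) - (n : ℤ)) := by
  refine ⟨fnLim, fun a ha n _ => ?_⟩
  calc |fn a n - fnLim a| = dist (fn a n) (fnLim a) := (Real.dist_eq _ _).symm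
    _ ≤ 4 / 2 ^ n := dist_fn_fnLim_le ha n
    _ ≤ 2 ^ 3 / 2 ^ n := by gcongr; norm_num
    _ = (2 : ℝ) ^ ((3 : ℤ) - (n : ℤ)) := by
      rw [zpow_sub₀ two_ne_zero, zpow_natCast, zpow_ofNat]
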